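/- Let k be a field and A an associative unital k-algebra. Write k[ε] = k[X]/(X²). A first-order deformation of A is an associative unital k[ε]-algebra B that is flat as a k[ε]-module, together with a k-algebra isomorphism k ⊗_{k[ε]} B ≅ A; two first-order deformations are equivalent if there is a k[ε]-algebra isomorphism between them compatible with the given identifications with A. Then the set of equivalence classes of first-order deformations of A is in canonical bijection with the second Hochschild cohomology group HH²(A) := Ext²_{A ⊗_k Aᵒᵖ}(A, A), where A is regarded as a left (A ⊗_k Aᵒᵖ)-module via left and right multiplication and Ext is computed in the abelian category of left (A ⊗_k Aᵒᵖ)-modules. -/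

import Mathlib

open TensorProduct CategoryTheory

namespace AlgebraDeformation

variable (k : Type) [Field k]

/-- `k` is an algebra over the dual numbers `k[ε] = k[X]/(X²)` via evaluation at `ε = 0`. -/
noncomputable instance : Algebra (DualNumber k) k :=
  (TrivSqZeroExt.fstHom k k k : DualNumber k →ₐ[k] k).toRingHom.toAlgebra

instance : SMulCommClass (DualNumber k) k k :=
  ⟨fun d a x => by
    simp only [Algebra.smul_def, smul_eq_mul]
    ring⟩

variable (A : Type) [Ring A] [Algebra k A]

/-- A first-order deformation of an associative unital `k`-algebra `A`: an associative
unital `k[ε]`-algebra `B` that is flat as a `k[ε]`-module, together with a `k`-algebra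
isomorphism `k ⊗_{k[ε]} B ≅ A`. -/
structure FirstOrderDeformation : Type 1 where
  /-- the underlying `k[ε]`-algebra of the deformation -/
  B : Type
  [ringB : Ring B]
  [algB : Algebra (DualNumber k) B]
  /-- the deformation is flat as a module over the dual numbers `k[ε]` -/
  flat : Module.Flat (DualNumber k) B
  /-- the identification of the special fiber `k ⊗_{k[ε]} B` with `A`,
  as `k`-algebras -/
  iso : (k ⊗[DualNumber k] B) ≃ₐ[k] A

attribute [instance] FirstOrderDeformation.ringB FirstOrderDeformation.algB

/-- Two first-order deformations of `A` are equivalent if there is a `k[ε]`-algebra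
isomorphism between them compatible with the given identifications of the special
fibers with `A`. -/
def Equivalent (d d' : FirstOrderDeformation k A) : Prop :=
  ∃ ψ : d.B ≃ₐ[DualNumber k] d'.B,
    ∀ (x : k) (b : d.B), d'.iso (x ⊗ₜ[DualNumber k] ψ b) = d.iso (x ⊗ₜ[DualNumber k] b)

/-- `A` is a left module over its enveloping algebra `A ⊗[k] Aᵐᵒᵖ`, via left and right
multiplication. -/
noncomputable instance : Module (A ⊗[k] Aᵐᵒᵖ) A := TensorProduct.Algebra.module

/-!
The bar resolution of `A` by free bimodules is built together with its contracting homotopy, which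
is linear for the right action of `A`. Applying `Hom(-, A)` to it identifies `Ext²` with bilinear
maps `μ : A × A → A` satisfying `a μ(b, c) - μ(ab, c) + μ(a, bc) - μ(a, b) c = 0`, modulo those of
the form `a g(b) - g(ab) + g(a) b`.

For a deformation `B`, flatness makes `0 → A → B → A → 0` exact, the first map being multiplication
by `ε`. A `k`-linear section `s` of `B → A` satisfies `s(a) s(b) = s(ab) + ε μ(a, b)` for a unique
`μ`. Associativity of `B` says that `μ` is a cocycle, and replacing `s` by `s + ε g` adds the
coboundary of `g` to `μ`. Conversely, every cocycle deforms the product of `A` to one on `A ⊕ ε A`.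
-/

/-! ### The bar resolution -/

section ResolutionOfExact

open Limits

universe v u

/-- The projective resolution given by an exact complex of projectives and an augmentation. -/
noncomputable def resolutionOfExact {C : Type u} [Category.{v} C] [Abelian C] {Z : C}
    (K : ChainComplex C ℕ) [∀ n, Projective (K.X n)] (ε : K.X 0 ⟶ Z) (hε : Epi ε)
    (w : K.d 1 0 ≫ ε = 0) (exact_zero : (ShortComplex.mk _ _ w).Exact)
    (exact_succ : ∀ n, (ShortComplex.mk _ _ (K.d_comp_d (n + 2) (n + 1) n)).Exact) :
    ProjectiveResolution Z where
  complex := K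
  π := (ChainComplex.toSingle₀Equiv K Z).symm ⟨ε, w⟩
  quasiIso := ⟨fun n => by
    cases n with
    | zero =>
      rw [ChainComplex.quasiIsoAt₀_iff,
        ShortComplex.quasiIso_iff_of_zeros' _ (K.shape _ _ (by simp)) rfl rfl]
      simpa using ⟨exact_zero, hε⟩
    | succ n =>
      rw [quasiIsoAt_iff_exactAt' (hL := ChainComplex.exactAt_succ_single_obj ..),
        HomologicalComplex.exactAt_iff' _ (n + 2) (n + 1) n (by simp) (by simp)]
      exact exact_succ n⟩

end ResolutionOfExact

/-- The homology of a short complex of modules, computed in a group `C` of cochains. -/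
noncomputable def quotientEquivHomology {R : Type*} [Ring R] (S : ShortComplex (ModuleCat R))
    {C : Type*} [AddCommGroup C] (e : C ≃+ S.X₂) (Z B : AddSubgroup C)
    (hZ : ∀ c, c ∈ Z ↔ S.g (e c) = 0) (hB : ∀ c, c ∈ B ↔ e c ∈ LinearMap.range S.f.hom) :
    Z ⧸ B.addSubgroupOf Z ≃+ S.homology :=
  let toKer : Z →+ LinearMap.ker S.g.hom :=
    { toFun z := ⟨e z, (hZ z).1 z.2⟩
      map_zero' := by simp
      map_add' := fun _ _ => Subtype.ext (map_add e _ _) }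
  let toQuotient := (LinearMap.range S.moduleCatToCycles).mkQ.toAddMonoidHom.comp toKer
  (QuotientAddGroup.liftEquiv (φ := toQuotient) _
    (by
      refine (Submodule.mkQ_surjective _).comp ?_
      rintro ⟨x, hx⟩
      exact ⟨⟨e.symm x, (hZ _).2 (by simpa using hx)⟩, Subtype.ext (e.apply_symm_apply x)⟩)
    (by
      ext z
      simp only [AddSubgroup.mem_addSubgroupOf, hB, AddMonoidHom.mem_ker]
      change _ ↔ Submodule.Quotient.mk _ = _
      rw [Submodule.Quotient.mk_eq_zero]
      simp only [toKer, LinearMap.mem_range, Subtype.ext_iff]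
      exact Iff.rfl)).trans
    S.moduleCatHomologyIso.symm.toLinearEquiv.toAddEquiv

section FreeModule

variable {R S V M : Type*} [CommSemiring R] [Semiring S] [Algebra R S]
  [AddCommMonoid V] [Module R V] [AddCommMonoid M] [Module R M] [Module S M] [IsScalarTower R S M]

/-- Extension of `R`-linear maps `V → M` to `S`-linear maps `S ⊗[R] V → M`; this is
`LinearMap.liftBaseChangeEquiv` without commutativity of `S`. -/
noncomputable def freeLift : (V →ₗ[R] M) ≃+ (S ⊗[R] V →ₗ[S] M) where
  toFun φ := TensorProduct.AlgebraTensorModule.lift (LinearMap.toSpanSingleton S (V →ₗ[R] M) φ)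
  invFun f := f.restrictScalars R ∘ₗ TensorProduct.mk R S V 1
  left_inv φ := by ext; simp
  right_inv f := by ext; simp
  map_add' φ ψ := by ext; simp

@[simp]
lemma freeLift_tmul (φ : V →ₗ[R] M) (x : S) (v : V) : freeLift φ (x ⊗ₜ[R] v) = x • φ v := by
  simp [freeLift]

end FreeModule

section BarResolution

variable {R S T V M : Type*} [CommRing R] [Ring S] [Algebra R S] [Ring T] [Algebra R T]
  [AddCommGroup V] [Module R V]
  [AddCommGroup M] [Module R M] [Module (S ⊗[R] T) M] [IsScalarTower R (S ⊗[R] T) M]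

variable (R S T V) in
/-- The contracting homotopy of the bar resolution, which makes the left outer tensor factor an
inner one. -/
noncomputable def barShift :
    (S ⊗[R] T) ⊗[R] V →ₗ[R] (S ⊗[R] T) ⊗[R] (S ⊗[R] V) :=
  (Algebra.TensorProduct.includeRight (R := R) (A := S) (B := T)).toLinearMap.rTensor
      (S ⊗[R] V) ∘ₗ
    (TensorProduct.assoc R T S V).toLinearMap ∘ₗ
      (TensorProduct.comm R S T).toLinearMap.rTensor V

@[simp]
lemma barShift_tmul (a : S) (b : T) (v : V) :
    barShift R S T V ((a ⊗ₜ b) ⊗ₜ v) = (1 ⊗ₜ b) ⊗ₜ (a ⊗ₜ v) := by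
  simp [barShift]

lemma barShift_smul (b : T) (x : (S ⊗[R] T) ⊗[R] V) :
    barShift R S T V (((1 : S) ⊗ₜ[R] b) • x) = ((1 : S) ⊗ₜ[R] b) • barShift R S T V x := by
  induction x with
  | zero => simp
  | add x y hx hy => simp only [smul_add, map_add, hx, hy]
  | tmul e v =>
    induction e with
    | zero => simp
    | add x y hx hy => simp only [add_tmul, smul_add, map_add, hx, hy]
    | tmul a c => simp [TensorProduct.smul_tmul']

variable (R S T) in
/-- The augmentation of the bar resolution of a module generated by `m`. -/
noncomputable def barAug (m : M) : (S ⊗[R] T) ⊗[R] R →ₗ[S ⊗[R] T] M :=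
  freeLift (LinearMap.toSpanSingleton R M m)

@[simp]
lemma barAug_tmul_one (m : M) (e : S ⊗[R] T) : barAug R S T m (e ⊗ₜ (1 : R)) = e • m := by
  simp [barAug]

/-- A stage in the construction of the bar resolution: a free `S ⊗ T`-module on `V`, a submodule `Z`
which the next differential has to hit (the kernel of the previous differential), and a projection
onto `Z` which is linear for `T` only. -/
structure BarStage (R S T : Type*) [CommRing R] [Ring S] [Algebra R S] [Ring T] [Algebra R T] where
  V : Type*
  [addCommGroup : AddCommGroup V]
  [module : Module R V]
  Z : Submodule (S ⊗[R] T) ((S ⊗[R] T) ⊗[R] V)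
  proj : (S ⊗[R] T) ⊗[R] V →ₗ[R] (S ⊗[R] T) ⊗[R] V
  proj_mem : ∀ x, proj x ∈ Z
  proj_eq_self : ∀ x ∈ Z, proj x = x
  proj_smul : ∀ (b : T) x, proj (((1 : S) ⊗ₜ[R] b) • x) = ((1 : S) ⊗ₜ[R] b) • proj x

namespace BarStage

attribute [instance] addCommGroup module

variable (P : BarStage R S T)

/-- The differential onto the submodule `Z` of a stage. -/
noncomputable def d :
    (S ⊗[R] T) ⊗[R] (S ⊗[R] P.V) →ₗ[S ⊗[R] T] (S ⊗[R] T) ⊗[R] P.V :=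
  freeLift (P.proj ∘ₗ (Algebra.TensorProduct.includeLeft (R := R) (S := R) (A := S)
    (B := T)).toLinearMap.rTensor P.V)

lemma d_tmul (e : S ⊗[R] T) (a : S) (v : P.V) :
    P.d (e ⊗ₜ (a ⊗ₜ v)) = e • P.proj ((a ⊗ₜ 1) ⊗ₜ v) := by
  simp [d]

lemma d_barShift (x : (S ⊗[R] T) ⊗[R] P.V) : P.d (barShift R S T P.V x) = P.proj x := by
  induction x with
  | zero => simp
  | add x y hx hy => simp only [map_add, hx, hy]
  | tmul e v =>
    induction e with
    | zero => simp
    | add x y hx hy => simp only [add_tmul, map_add, hx, hy]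
    | tmul a b => simp [d_tmul, ← P.proj_smul, TensorProduct.smul_tmul']

lemma range_d : LinearMap.range P.d = P.Z := by
  refine le_antisymm ?_ fun x hx => ⟨barShift R S T P.V x, by rw [d_barShift, P.proj_eq_self x hx]⟩
  rintro _ ⟨x, rfl⟩
  induction x with
  | zero => simp
  | add x y hx hy => simpa only [map_add] using P.Z.add_mem hx hy
  | tmul e v =>
    induction v with
    | zero => simp
    | add v w hv hw => simpa only [tmul_add, map_add] using P.Z.add_mem hv hw
    | tmul a v => simpa only [d_tmul] using P.Z.smul_mem e (P.proj_mem _)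

/-- The stage after a map `d` with a homotopy `s`: its submodule is the kernel of `d`, onto which
`1 - s ∘ d` projects. -/
noncomputable abbrev ofHomotopy (d : (S ⊗[R] T) ⊗[R] V →ₗ[S ⊗[R] T] M)
    (s : M →ₗ[R] (S ⊗[R] T) ⊗[R] V) (hd : ∀ x, d (s (d x)) = d x)
    (hs : ∀ (b : T) (y : M), s (((1 : S) ⊗ₜ[R] b) • y) = ((1 : S) ⊗ₜ[R] b) • s y) :
    BarStage R S T where
  V := V
  Z := LinearMap.ker d
  proj := LinearMap.id - s ∘ₗ d.restrictScalars R
  proj_mem x := by simp [hd]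
  proj_eq_self x hx := by simp [LinearMap.mem_ker.1 hx]
  proj_smul b x := by simp [smul_sub, hs]

/-- The initial stage for a module `M` which is free over `T` on a generator `m`; its submodule is
the kernel of the augmentation `e ↦ e • m`, and `coord` is the coordinate with respect to `m`. -/
noncomputable abbrev ofGenerator (m : M) (coord : M →ₗ[R] T)
    (coord_smul_generator : ∀ y, ((1 : S) ⊗ₜ[R] coord y) • m = y)
    (coord_smul : ∀ (b : T) y, coord (((1 : S) ⊗ₜ[R] b) • y) = b * coord y) : BarStage R S T :=
  ofHomotopy (V := R) (barAug R S T m)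
    ((TensorProduct.mk R (S ⊗[R] T) R).flip 1 ∘ₗ TensorProduct.mk R S T 1 ∘ₗ coord)
    (by simp [coord_smul_generator])
    (by simp [coord_smul, TensorProduct.smul_tmul'])

lemma d_proj (x : (S ⊗[R] T) ⊗[R] (S ⊗[R] P.V)) : P.proj (P.d x) = P.d x :=
  P.proj_eq_self _ (P.range_d ▸ LinearMap.mem_range_self P.d x)

/-- The stage after the differential of a stage. -/
noncomputable abbrev next : BarStage R S T :=
  ofHomotopy P.d (barShift R S T P.V) (fun x => by rw [d_barShift, d_proj]) barShift_smul

lemma exact_d_next : Function.Exact P.next.d P.d :=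
  LinearMap.exact_iff.2 P.next.range_d.symm

lemma next_proj (a b : S) (v : P.V) :
    P.next.proj ((a ⊗ₜ 1) ⊗ₜ (b ⊗ₜ v)) = (a ⊗ₜ 1) ⊗ₜ (b ⊗ₜ v) -
      barShift R S T P.V ((a ⊗ₜ[R] (1 : T)) • P.proj ((b ⊗ₜ 1) ⊗ₜ v)) := by
  simp [d_tmul]

end BarStage

section Cochains

variable {m : M} {coord : M →ₗ[R] T} {h : ∀ y, ((1 : S) ⊗ₜ[R] coord y) • m = y}
  {h' : ∀ (b : T) y, coord (((1 : S) ⊗ₜ[R] b) • y) = b * coord y}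
  {N : Type*} [AddCommGroup N] [Module R N] [Module (S ⊗[R] T) N] [IsScalarTower R (S ⊗[R] T) N]

variable (R S T N) in
/-- Linear maps as `1`-cochains on the bar resolution. -/
noncomputable def cochainOne :
    (S →ₗ[R] N) ≃+ ((S ⊗[R] T) ⊗[R] (S ⊗[R] R) →ₗ[S ⊗[R] T] N) :=
  (LinearEquiv.congrLeft N R (TensorProduct.rid R S)).symm.toAddEquiv.trans freeLift

variable (R S T N) in
/-- Bilinear maps as `2`-cochains on the bar resolution. -/
noncomputable def cochainTwo :
    (S →ₗ[R] S →ₗ[R] N) ≃+ ((S ⊗[R] T) ⊗[R] (S ⊗[R] (S ⊗[R] R)) →ₗ[S ⊗[R] T] N) :=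
  ((TensorProduct.lift.equiv (RingHom.id R) S S N).trans
    (LinearEquiv.congrLeft N R ((TensorProduct.rid R S).lTensor S)).symm).toAddEquiv.trans freeLift

@[simp]
lemma cochainOne_tmul (g : S →ₗ[R] N) (e : S ⊗[R] T) (a : S) :
    cochainOne R S T N g (e ⊗ₜ (a ⊗ₜ 1)) = e • g a := by
  simp [cochainOne]

@[simp]
lemma cochainTwo_tmul (μ : S →ₗ[R] S →ₗ[R] N) (e : S ⊗[R] T) (a b : S) :
    cochainTwo R S T N μ (e ⊗ₜ (a ⊗ₜ (b ⊗ₜ 1))) = e • μ a b := by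
  simp [cochainTwo]

lemma BarStage.ofGenerator_proj (a : S) :
    (BarStage.ofGenerator m coord h h').proj ((a ⊗ₜ 1) ⊗ₜ 1) =
      (a ⊗ₜ 1) ⊗ₜ 1 - (1 ⊗ₜ coord ((a ⊗ₜ[R] (1 : T)) • m)) ⊗ₜ 1 := by
  simp

lemma BarStage.ofGenerator_next_proj (a b : S) :
    (BarStage.ofGenerator m coord h h').next.proj ((a ⊗ₜ 1) ⊗ₜ (b ⊗ₜ 1)) =
      (a ⊗ₜ 1) ⊗ₜ (b ⊗ₜ 1) - 1 ⊗ₜ ((a * b) ⊗ₜ 1)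
        + (1 ⊗ₜ coord ((b ⊗ₜ[R] (1 : T)) • m)) ⊗ₜ (a ⊗ₜ 1) := by
  rw [BarStage.next_proj, BarStage.ofGenerator_proj]
  simp [smul_sub, TensorProduct.smul_tmul', Algebra.TensorProduct.one_def, sub_add]

lemma BarStage.ofGenerator_next_next_proj (a b c : S) :
    (BarStage.ofGenerator m coord h h').next.next.proj ((a ⊗ₜ 1) ⊗ₜ (b ⊗ₜ (c ⊗ₜ 1))) =
      (a ⊗ₜ 1) ⊗ₜ (b ⊗ₜ (c ⊗ₜ 1)) - 1 ⊗ₜ ((a * b) ⊗ₜ (c ⊗ₜ 1)) + 1 ⊗ₜ (a ⊗ₜ ((b * c) ⊗ₜ 1))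
        - (1 ⊗ₜ coord ((c ⊗ₜ[R] (1 : T)) • m)) ⊗ₜ (a ⊗ₜ (b ⊗ₜ 1)) := by
  rw [BarStage.next_proj, BarStage.ofGenerator_next_proj]
  simp [smul_sub, smul_add, TensorProduct.smul_tmul', Algebra.TensorProduct.one_def]
  abel

lemma cochainOne_comp_d_eq_iff (g : S →ₗ[R] N) (μ : S →ₗ[R] S →ₗ[R] N) :
    cochainOne R S T N g ∘ₗ (BarStage.ofGenerator m coord h h').next.d = cochainTwo R S T N μ ↔
      ∀ a b, (a ⊗ₜ[R] (1 : T)) • g b - g (a * b) +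
        ((1 : S) ⊗ₜ[R] coord ((b ⊗ₜ[R] (1 : T)) • m)) • g a = μ a b := by
  have apply_d (a b : S) : cochainOne R S T N g
      ((BarStage.ofGenerator m coord h h').next.d (1 ⊗ₜ (a ⊗ₜ (b ⊗ₜ 1)))) =
        (a ⊗ₜ[R] (1 : T)) • g b - g (a * b) +
          ((1 : S) ⊗ₜ[R] coord ((b ⊗ₜ[R] (1 : T)) • m)) • g a := by
    rw [BarStage.d_tmul, BarStage.ofGenerator_next_proj]
    simp
  refine ⟨fun H a b => ?_, fun H => ?_⟩
  · rw [← apply_d, ← LinearMap.comp_apply, H, cochainTwo_tmul, one_smul]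
  · ext a b
    simpa [H] using apply_d a b

lemma cochainTwo_comp_d_eq_zero_iff (μ : S →ₗ[R] S →ₗ[R] N) :
    cochainTwo R S T N μ ∘ₗ (BarStage.ofGenerator m coord h h').next.next.d = 0 ↔
      ∀ a b c, (a ⊗ₜ[R] (1 : T)) • μ b c - μ (a * b) c + μ a (b * c) -
        ((1 : S) ⊗ₜ[R] coord ((c ⊗ₜ[R] (1 : T)) • m)) • μ a b = 0 := by
  have apply_d (a b c : S) : cochainTwo R S T N μ
      ((BarStage.ofGenerator m coord h h').next.next.d (1 ⊗ₜ (a ⊗ₜ (b ⊗ₜ (c ⊗ₜ 1))))) =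
        (a ⊗ₜ[R] (1 : T)) • μ b c - μ (a * b) c + μ a (b * c) -
          ((1 : S) ⊗ₜ[R] coord ((c ⊗ₜ[R] (1 : T)) • m)) • μ a b := by
    rw [BarStage.d_tmul, BarStage.ofGenerator_next_next_proj]
    simp
  refine ⟨fun H a b c => ?_, fun H => ?_⟩
  · rw [← apply_d, ← LinearMap.comp_apply, H, LinearMap.zero_apply]
  · ext a b c
    simpa [H] using apply_d a b c

end Cochains

end BarResolution

section HochschildCochains

variable (R S : Type*) [CommRing R] [Ring S] [Algebra R S]

/-- Hochschild `2`-cocycles of `S` with values in `S`. -/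
def hochschildCocycles : AddSubgroup (S →ₗ[R] S →ₗ[R] S) where
  carrier := {μ | ∀ a b c, a * μ b c - μ (a * b) c + μ a (b * c) - μ a b * c = 0}
  zero_mem' := by simp
  add_mem' {μ ν} hμ hν a b c := by
    simp only [LinearMap.add_apply]
    linear_combination (norm := noncomm_ring) hμ a b c + hν a b c
  neg_mem' {μ} hμ a b c := by
    simp only [LinearMap.neg_apply]
    linear_combination (norm := noncomm_ring) -hμ a b c

/-- The Hochschild differential from `1`-cochains to `2`-cochains. -/
def hochschildCoboundary : (S →ₗ[R] S) →+ (S →ₗ[R] S →ₗ[R] S) where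
  toFun g := (LinearMap.mul R S).compl₂ g - (LinearMap.mul R S).compr₂ g + LinearMap.mul R S ∘ₗ g
  map_zero' := by ext; simp
  map_add' g h := by ext; simp [mul_add]; abel

variable {R S} in
@[simp]
lemma hochschildCoboundary_apply (g : S →ₗ[R] S) (a b : S) :
    hochschildCoboundary R S g a b = a * g b - g (a * b) + g a * b := rfl

/-- The second Hochschild cohomology group of `S`, in terms of cocycles. -/
abbrev HH2 := hochschildCocycles R S ⧸
  (hochschildCoboundary R S).range.addSubgroupOf (hochschildCocycles R S)

end HochschildCochains

instance : IsScalarTower k (A ⊗[k] Aᵐᵒᵖ) A where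
  smul_assoc c e a := by
    change TensorProduct.Algebra.moduleAux _ _ = _ • TensorProduct.Algebra.moduleAux _ _
    simp

variable {k A} in
@[simp]
lemma enveloping_smul (a : A) (b : Aᵐᵒᵖ) (x : A) : (a ⊗ₜ[k] b) • x = a * (x * b.unop) := by
  rw [TensorProduct.Algebra.smul_def]; rfl

/-- The initial stage of the bar resolution of `A`, generated by `1` over `Aᵐᵒᵖ`. -/
noncomputable abbrev barStart : BarStage.{0, 0, 0, 0} k A Aᵐᵒᵖ :=
  .ofGenerator (1 : A) (MulOpposite.opLinearEquiv k).toLinearMap (by simp)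
    (by simp [-MulOpposite.op_smul])

/-- The stages of the bar resolution of `A`, on the powers `A^{⊗ n}`. -/
noncomputable def barStage : ℕ → BarStage.{0, 0, 0, 0} k A Aᵐᵒᵖ
  | 0 => barStart k A
  | n + 1 => (barStage n).next

/-- The bar complex of `A`, a complex of free `A`-bimodules. -/
noncomputable def barComplex : ChainComplex (ModuleCat.{0} (A ⊗[k] Aᵐᵒᵖ)) ℕ :=
  ChainComplex.of (fun n => ModuleCat.of (A ⊗[k] Aᵐᵒᵖ) ((A ⊗[k] Aᵐᵒᵖ) ⊗[k] (barStage k A n).V))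
    (fun n => ModuleCat.ofHom (barStage k A n).d)
    (fun n => ModuleCat.hom_ext <| LinearMap.ext fun x =>
      (barStage k A n).exact_d_next.apply_apply_eq_zero x)

lemma barComplex_d (n : ℕ) :
    (barComplex k A).d (n + 1) n = ModuleCat.ofHom (barStage k A n).d :=
  ChainComplex.of_d (fun n => ModuleCat.of (A ⊗[k] Aᵐᵒᵖ) ((A ⊗[k] Aᵐᵒᵖ) ⊗[k] (barStage k A n).V))
    (fun n => ModuleCat.ofHom (barStage k A n).d) n

instance (n : ℕ) : Projective ((barComplex k A).X n) :=
  inferInstanceAs (Projective (ModuleCat.of _ ((A ⊗[k] Aᵐᵒᵖ) ⊗[k] (barStage k A n).V)))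

lemma barComplex_exact (n : ℕ) :
    (ShortComplex.mk _ _ ((barComplex k A).d_comp_d (n + 2) (n + 1) n)).Exact := by
  simp only [ShortComplex.ShortExact.moduleCat_exact_iff_function_exact, barComplex_d]
  exact (barStage k A n).exact_d_next

lemma exact_d_barAug : Function.Exact (barStage k A 0).d (barAug k A Aᵐᵒᵖ (1 : A)) :=
  LinearMap.exact_iff.2 (barStage k A 0).range_d.symm

lemma barAug_surjective : Function.Surjective (barAug k A Aᵐᵒᵖ (1 : A)) := fun a =>
  ⟨((1 : A) ⊗ₜ[k] MulOpposite.op a) ⊗ₜ[k] (1 : k), (barAug_tmul_one _ _).trans (by simp)⟩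

lemma barComplex_d_comp_barAug :
    (barComplex k A).d 1 0 ≫ ModuleCat.ofHom (barAug k A Aᵐᵒᵖ (1 : A)) = 0 := by
  rw [barComplex_d]
  exact ModuleCat.hom_ext (LinearMap.ext (exact_d_barAug k A).apply_apply_eq_zero)

/-- The bar resolution of `A` by free bimodules. -/
noncomputable def barResolution : ProjectiveResolution (ModuleCat.of (A ⊗[k] Aᵐᵒᵖ) A) :=
  resolutionOfExact (barComplex k A) (ModuleCat.ofHom (barAug k A Aᵐᵒᵖ (1 : A)))
    ((ModuleCat.epi_iff_surjective _).2 (barAug_surjective k A)) (barComplex_d_comp_barAug k A)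
    (by
      simp only [ShortComplex.ShortExact.moduleCat_exact_iff_function_exact, barComplex_d]
      exact exact_d_barAug k A)
    (barComplex_exact k A)

lemma mem_hochschildCocycles_iff (μ : A →ₗ[k] A →ₗ[k] A) :
    μ ∈ hochschildCocycles k A ↔ cochainTwo k A Aᵐᵒᵖ A μ ∘ₗ (barStart k A).next.next.d = 0 := by
  refine .trans ?_ (cochainTwo_comp_d_eq_zero_iff ..).symm
  simp [hochschildCocycles]

lemma hochschildCoboundary_eq_iff (g : A →ₗ[k] A) (μ : A →ₗ[k] A →ₗ[k] A) :
    hochschildCoboundary k A g = μ ↔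
      cochainOne k A Aᵐᵒᵖ A g ∘ₗ (barStart k A).next.d = cochainTwo k A Aᵐᵒᵖ A μ := by
  refine .trans ?_ (cochainOne_comp_d_eq_iff ..).symm
  simp [LinearMap.ext_iff]

/-- Bilinear maps `A × A → A` as `2`-cochains of the bar resolution. -/
noncomputable def barCochainTwo : (A →ₗ[k] A →ₗ[k] A) ≃+
    ((barResolution k A).complex.X 2 ⟶ ModuleCat.of (A ⊗[k] Aᵐᵒᵖ) A) :=
  (cochainTwo k A Aᵐᵒᵖ A).trans
    (ModuleCat.homAddEquiv (M := ModuleCat.of _ ((A ⊗[k] Aᵐᵒᵖ) ⊗[k] (barStage k A 2).V))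
      (N := ModuleCat.of (A ⊗[k] Aᵐᵒᵖ) A)).symm

/-- Linear maps `A → A` as `1`-cochains of the bar resolution. -/
noncomputable def barCochainOne : (A →ₗ[k] A) ≃+
    ((barResolution k A).complex.X 1 ⟶ ModuleCat.of (A ⊗[k] Aᵐᵒᵖ) A) :=
  (cochainOne k A Aᵐᵒᵖ A).trans
    (ModuleCat.homAddEquiv (M := ModuleCat.of _ ((A ⊗[k] Aᵐᵒᵖ) ⊗[k] (barStage k A 1).V))
      (N := ModuleCat.of (A ⊗[k] Aᵐᵒᵖ) A)).symm

lemma d_comp_barCochainTwo_eq_zero_iff (μ : A →ₗ[k] A →ₗ[k] A) :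
    (barResolution k A).complex.d 3 2 ≫ barCochainTwo k A μ = 0 ↔ μ ∈ hochschildCocycles k A := by
  rw [show (barResolution k A).complex.d 3 2 = _ from barComplex_d k A 2,
    mem_hochschildCocycles_iff]
  exact ModuleCat.hom_ext_iff

lemma d_comp_barCochainOne_eq_iff (g : A →ₗ[k] A) (μ : A →ₗ[k] A →ₗ[k] A) :
    (barResolution k A).complex.d 2 1 ≫ barCochainOne k A g = barCochainTwo k A μ ↔
      hochschildCoboundary k A g = μ := by
  rw [show (barResolution k A).complex.d 2 1 = _ from barComplex_d k A 1,
    hochschildCoboundary_eq_iff]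
  exact ModuleCat.hom_ext_iff

/-- The identification of `HH²` with the second `Ext` group over the enveloping algebra. -/
noncomputable def extTwoAddEquiv :
    HH2 k A ≃+ ((Ext ℤ (ModuleCat.{0} (A ⊗[k] Aᵐᵒᵖ)) 2).obj
      (Opposite.op (ModuleCat.of (A ⊗[k] Aᵐᵒᵖ) A))).obj (ModuleCat.of (A ⊗[k] Aᵐᵒᵖ) A) :=
  let K := (barResolution k A).complex.linearYonedaObj ℤ (ModuleCat.of (A ⊗[k] Aᵐᵒᵖ) A)
  (quotientEquivHomology (K.sc' 1 2 3) (barCochainTwo k A) _ _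
    (fun μ => (d_comp_barCochainTwo_eq_zero_iff k A μ).symm)
    (fun μ => (exists_congr fun g => (d_comp_barCochainOne_eq_iff k A g μ).symm).trans
      ((barCochainOne k A).surjective.exists
        (p := fun f => (barResolution k A).complex.d 2 1 ≫ f = barCochainTwo k A μ)).symm)).trans
    ((barResolution k A).isoExt 2 _ ≪≫ ShortComplex.homologyMapIso
      (K.isoSc' 1 2 3 (by simp) (by simp))).symm.toLinearEquiv.toAddEquiv

/-! ### Deformations -/

section Fiber

open DualNumber

lemma dualNumber_smul_decomp {R B : Type*} [CommRing R] [AddCommGroup B] [Module R[ε] B]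
    [Module R B] [IsScalarTower R R[ε] B] (d : R[ε]) (b : B) :
    d • b = d.fst • b + d.snd • (ε : R[ε]) • b := by
  have hd : d = d.fst • 1 + d.snd • ε := by ext <;> simp
  conv_lhs => rw [hd, add_smul, smul_assoc, smul_assoc, one_smul]

variable {k} {B : Type*} [AddCommGroup B] [Module k[ε] B]

@[simp]
lemma dualNumber_smul_eq (d : k[ε]) (x : k) : d • x = d.fst * x := rfl

lemma tmul_eps_smul (x : k) (b : B) : x ⊗ₜ[k[ε]] ((ε : k[ε]) • b) = 0 := by
  rw [← smul_tmul, dualNumber_smul_eq]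
  simp

instance : IsScalarTower k k[ε] k := ⟨fun c d x => mul_assoc c d.fst x⟩

variable (k) in
/-- Multiplication by `ε`, as a map from the residue field of `k[ε]` to `k[ε]`. -/
def epsMul : k →ₗ[k[ε]] k[ε] where
  toFun := TrivSqZeroExt.inr
  map_add' := TrivSqZeroExt.inr_add k
  map_smul' d x := by ext <;> simp [mul_comm]

variable (k) in
lemma exact_epsMul : Function.Exact (epsMul k) (Algebra.linearMap k[ε] k) := fun d =>
  ⟨fun hd => ⟨d.snd, TrivSqZeroExt.ext (Eq.symm hd) rfl⟩, by rintro ⟨x, rfl⟩; rfl⟩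

variable (k B) in
/-- Multiplication by `ε` on a `k[ε]`-module, which factors through the special fiber. -/
noncomputable def fiberIncl : k ⊗[k[ε]] B →ₗ[k[ε]] B :=
  (TensorProduct.lid k[ε] B).toLinearMap ∘ₗ (epsMul k).rTensor B

@[simp]
lemma fiberIncl_tmul (x : k) (b : B) :
    fiberIncl k B (x ⊗ₜ b) = (TrivSqZeroExt.inr x : k[ε]) • b := rfl

lemma fiberIncl_injective [Module.Flat k[ε] B] : Function.Injective (fiberIncl k B) :=
  (TensorProduct.lid k[ε] B).injective.comp <|
    Module.Flat.rTensor_preserves_injective_linearMap _ TrivSqZeroExt.inr_injective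

lemma exact_fiberIncl : Function.Exact (fiberIncl k B) (TensorProduct.mk k[ε] k B 1) := by
  have h := rTensor_exact B (exact_epsMul k) TrivSqZeroExt.fst_surjective
  refine (Function.Exact.iff_of_ladder_linearEquiv (g₁₂ := fiberIncl k B)
    (g₂₃ := TensorProduct.mk k[ε] k B 1) (e₁ := .refl ..)
    (e₂ := TensorProduct.lid k[ε] B) (e₃ := .refl ..) rfl ?_).2 h
  ext
  simp

end Fiber

/-- The `R[ε]`-algebra `S ⊕ ε S` with multiplication deformed by a `2`-cocycle. -/
@[ext]
structure CocycleExtension {R S : Type*} [CommRing R] [Ring S] [Algebra R S]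
    (μ : hochschildCocycles R S) where
  fst : S
  snd : S

namespace CocycleExtension

open DualNumber

section Algebra

variable {R S : Type*} [CommRing R] [Ring S] [Algebra R S] {μ : hochschildCocycles R S}

/-- A cocycle extension as a product. -/
def equivProd (μ : hochschildCocycles R S) : CocycleExtension μ ≃ S × S where
  toFun x := (x.fst, x.snd)
  invFun x := ⟨x.1, x.2⟩

instance : AddCommGroup (CocycleExtension μ) := (equivProd μ).addCommGroup

@[simp] lemma fst_add (x y : CocycleExtension μ) : (x + y).fst = x.fst + y.fst := rfl
@[simp] lemma snd_add (x y : CocycleExtension μ) : (x + y).snd = x.snd + y.snd := rfl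
@[simp] lemma fst_zero : (0 : CocycleExtension μ).fst = 0 := rfl
@[simp] lemma snd_zero : (0 : CocycleExtension μ).snd = 0 := rfl

instance : Mul (CocycleExtension μ) :=
  ⟨fun x y => ⟨x.fst * y.fst, x.fst * y.snd + x.snd * y.fst + μ.1 x.fst y.fst⟩⟩

-- An unnormalized cocycle moves the unit away from `1 + 0 ε`.
instance : One (CocycleExtension μ) := ⟨⟨1, -μ.1 1 1⟩⟩

@[simp] lemma fst_mul (x y : CocycleExtension μ) : (x * y).fst = x.fst * y.fst := rfl
@[simp] lemma snd_mul (x y : CocycleExtension μ) :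
    (x * y).snd = x.fst * y.snd + x.snd * y.fst + μ.1 x.fst y.fst := rfl
@[simp] lemma fst_one : (1 : CocycleExtension μ).fst = 1 := rfl
@[simp] lemma snd_one : (1 : CocycleExtension μ).snd = -μ.1 1 1 := rfl

lemma apply_one_right (μ : hochschildCocycles R S) (a : S) : μ.1 a 1 = a * μ.1 1 1 :=
  (sub_eq_zero.1 (by simpa using μ.2 a 1 1)).symm

lemma apply_one_left (μ : hochschildCocycles R S) (a : S) : μ.1 1 a = μ.1 1 1 * a := by
  simpa [sub_eq_zero] using μ.2 1 1 a

instance : Ring (CocycleExtension μ) where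
  __ := (inferInstance : AddCommGroup (CocycleExtension μ))
  left_distrib x y z := by ext <;> simp [mul_add]; abel
  right_distrib x y z := by ext <;> simp [add_mul]; abel
  zero_mul x := by ext <;> simp
  mul_zero x := by ext <;> simp
  one_mul x := by ext <;> simp [apply_one_left μ x.fst]
  mul_one x := by ext <;> simp [apply_one_right μ x.fst]
  mul_assoc x y z := by
    ext
    · simp [mul_assoc]
    · simp only [fst_mul, snd_mul]
      linear_combination (norm := noncomm_ring) -μ.2 x.fst y.fst z.fst

instance : SMul R[ε] (CocycleExtension μ) :=
  ⟨fun d x => ⟨d.fst • x.fst, d.fst • x.snd + d.snd • x.fst⟩⟩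

@[simp] lemma fst_smul (d : R[ε]) (x : CocycleExtension μ) : (d • x).fst = d.fst • x.fst := rfl
@[simp] lemma snd_smul (d : R[ε]) (x : CocycleExtension μ) :
    (d • x).snd = d.fst • x.snd + d.snd • x.fst := rfl

instance : Module R[ε] (CocycleExtension μ) where
  one_smul x := by ext <;> simp
  mul_smul c d x := by ext <;> simp [mul_smul, add_smul, add_assoc, smul_comm c.snd d.fst]
  smul_zero c := by ext <;> simp
  zero_smul x := by ext <;> simp
  smul_add c x y := by ext <;> simp; abel
  add_smul c d x := by ext <;> simp [add_smul]; abel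

instance : Algebra R[ε] (CocycleExtension μ) :=
  Algebra.ofModule (fun c x y => by ext <;> simp [add_mul, smul_add]; abel)
    (fun c x y => by ext <;> simp [mul_add, smul_add]; abel)

instance : Algebra R (CocycleExtension μ) := .compHom _ (algebraMap R R[ε])

instance : IsScalarTower R R[ε] (CocycleExtension μ) := ⟨fun c d x => by
  rw [Algebra.smul_def, mul_smul]
  rfl⟩

/-- The elements without `ε`-term. -/
def const (μ : hochschildCocycles R S) : S →ₗ[R] CocycleExtension μ where
  toFun a := ⟨a, 0⟩
  map_add' a b := by ext <;> simp
  map_smul' c a := by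
    rw [RingHom.id_apply, ← algebraMap_smul R[ε] c (⟨a, 0⟩ : CocycleExtension μ)]
    ext <;> simp [TrivSqZeroExt.algebraMap_eq_inl]

@[simp] lemma fst_const (a : S) : (const μ a).fst = a := rfl
@[simp] lemma snd_const (a : S) : (const μ a).snd = 0 := rfl

lemma eq_const_add (x : CocycleExtension μ) :
    x = const μ x.fst + (ε : R[ε]) • const μ x.snd := by
  ext <;> simp

lemma freeLift_const_decomp (z : R[ε] ⊗[R] S) :
    1 ⊗ₜ (freeLift (const μ) z).fst + ε ⊗ₜ (freeLift (const μ) z).snd = z := by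
  induction z with
  | zero => simp
  | add x y hx hy =>
    simp only [map_add, fst_add, snd_add, tmul_add]
    rw [add_add_add_comm, hx, hy]
  | tmul d a =>
    have hd := dualNumber_smul_decomp d (1 : R[ε])
    simp only [smul_eq_mul, mul_one] at hd
    conv_rhs => rw [hd, add_tmul]
    simp [smul_tmul]

instance [Module.Flat R S] : Module.Flat R[ε] (CocycleExtension μ) :=
  .of_linearEquiv (M := R[ε] ⊗[R] S) (N := CocycleExtension μ) <| .symm
    { (freeLift (const μ) : R[ε] ⊗[R] S →ₗ[R[ε]] CocycleExtension μ) with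
      invFun x := 1 ⊗ₜ x.fst + ε ⊗ₜ x.snd
      left_inv := freeLift_const_decomp
      right_inv x := by ext <;> simp }

end Algebra

variable {k A} {μ : hochschildCocycles k A}

lemma one_tmul_eq (x : CocycleExtension μ) :
    (1 : k) ⊗ₜ[k[ε]] x = 1 ⊗ₜ const μ x.fst := by
  conv_lhs => rw [eq_const_add x, tmul_add, tmul_eps_smul, add_zero]

variable (μ) in
/-- The algebra map which identifies `A` with the special fiber of a cocycle extension. -/
noncomputable def toFiber : A →ₐ[k] k ⊗[k[ε]] CocycleExtension μ :=
  .ofLinearMap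
    ((Algebra.TensorProduct.includeRight.restrictScalars k).toLinearMap ∘ₗ const μ)
    (one_tmul_eq 1).symm (fun a b => by simp [one_tmul_eq (const μ a * const μ b)])

@[simp]
lemma toFiber_apply (a : A) : toFiber μ a = 1 ⊗ₜ const μ a := rfl

lemma toFiber_bijective : Function.Bijective (toFiber μ) := by
  constructor
  · refine (injective_iff_map_eq_zero _).2 fun a ha => ?_
    simpa using congrArg (fun z => (fiberIncl k _ z).snd) ha
  · intro z
    induction z with
    | zero => exact ⟨0, map_zero _⟩
    | add x y hx hy =>
      obtain ⟨a, rfl⟩ := hx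
      obtain ⟨b, rfl⟩ := hy
      exact ⟨a + b, map_add _ a b⟩
    | tmul c x =>
      refine ⟨c • x.fst, ?_⟩
      rw [map_smul, toFiber_apply, ← one_tmul_eq, smul_tmul', smul_eq_mul, mul_one]

end CocycleExtension

namespace FirstOrderDeformation

open DualNumber

variable {k A} (d : FirstOrderDeformation k A)

instance : Module.Flat k[ε] d.B := d.flat

noncomputable instance : Algebra k d.B := .compHom _ (algebraMap k k[ε])

instance : IsScalarTower k k[ε] d.B := ⟨fun c x b => by
  rw [Algebra.smul_def c x]
  exact mul_smul _ x b⟩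

/-- The reduction of a deformation modulo `ε`. -/
noncomputable def proj : d.B →ₐ[k] A :=
  d.iso.toAlgHom.comp (Algebra.TensorProduct.includeRight.restrictScalars k)

/-- The inclusion of `A` into a deformation as the multiples of `ε`. -/
noncomputable def incl : A →ₗ[k] d.B :=
  (fiberIncl k d.B).restrictScalars k ∘ₗ d.iso.symm.toLinearMap

lemma iso_tmul (x : k) (b : d.B) : d.iso (x ⊗ₜ b) = x • d.proj b := by
  rw [proj, AlgHom.comp_apply, AlgEquiv.toAlgHom_apply, ← map_smul]
  simp [smul_tmul']

lemma incl_proj (b : d.B) : d.incl (d.proj b) = (ε : k[ε]) • b := by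
  simp [incl, proj]

lemma proj_surjective : Function.Surjective d.proj :=
  d.iso.surjective.comp (TensorProduct.mk_surjective _ _ _ TrivSqZeroExt.fst_surjective)

lemma incl_injective : Function.Injective d.incl :=
  fiberIncl_injective.comp d.iso.symm.injective

lemma exact_incl_proj : Function.Exact d.incl d.proj := fun b =>
  (map_eq_zero_iff d.iso d.iso.injective).trans <|
    (exact_fiberIncl (k := k) b).trans
      (d.iso.symm.surjective.exists (p := fun z => fiberIncl k d.B z = b))

@[simp]
lemma proj_incl (a : A) : d.proj (d.incl a) = 0 := d.exact_incl_proj.apply_apply_eq_zero a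

lemma exists_incl_retraction :
    ∃ r : d.B →ₗ[k] A, ∀ b, d.proj b = 0 → d.incl (r b) = b := by
  obtain ⟨r, hr⟩ :=
    d.incl.exists_leftInverse_of_injective (LinearMap.ker_eq_bot.2 d.incl_injective)
  refine ⟨r, fun b hb => ?_⟩
  obtain ⟨a, rfl⟩ := (d.exact_incl_proj b).1 hb
  exact congrArg d.incl (LinearMap.congr_fun hr a)

lemma incl_mul (a : A) (b : d.B) : d.incl a * b = d.incl (a * d.proj b) := by
  obtain ⟨b', rfl⟩ := d.proj_surjective a
  rw [← map_mul, incl_proj, incl_proj, smul_mul_assoc]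

lemma mul_incl (b : d.B) (a : A) : b * d.incl a = d.incl (d.proj b * a) := by
  obtain ⟨b', rfl⟩ := d.proj_surjective a
  rw [← map_mul, incl_proj, incl_proj, mul_smul_comm]

lemma smul_eq (c : k[ε]) (b : d.B) : c • b = c.fst • b + c.snd • d.incl (d.proj b) := by
  rw [incl_proj]
  exact dualNumber_smul_decomp c b

lemma equivalent_iff (d d' : FirstOrderDeformation k A) : Equivalent k A d d' ↔
    ∃ ψ : d.B ≃ₐ[k[ε]] d'.B, ∀ b, d'.proj (ψ b) = d.proj b := by
  refine exists_congr fun ψ => ⟨fun h b => ?_, fun h x b => by rw [iso_tmul, iso_tmul, h]⟩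
  simpa [iso_tmul] using h 1 b

lemma equivalence_equivalent : Equivalence (Equivalent k A) where
  refl d := ⟨.refl, fun _ _ => rfl⟩
  symm {d d'} := fun ⟨ψ, h⟩ => ⟨ψ.symm, fun x b => by simpa using (h x (ψ.symm b)).symm⟩
  trans := fun ⟨ψ, h⟩ ⟨φ, h'⟩ => ⟨ψ.trans φ, fun x b => (h' x (ψ b)).trans (h x b)⟩

/-- A `k`-linear section of the reduction modulo `ε` which is multiplicative up to the error
term `ε μ`. -/
structure IsSection (μ : A →ₗ[k] A →ₗ[k] A) (s : A →ₗ[k] d.B) : Prop where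
  proj_apply : ∀ a, d.proj (s a) = a
  apply_mul_apply : ∀ a b, s a * s b = s (a * b) + d.incl (μ a b)

namespace IsSection

variable {d} {μ μ' : A →ₗ[k] A →ₗ[k] A} {s s' : A →ₗ[k] d.B}

lemma mem_hochschildCocycles (h : d.IsSection μ s) : μ ∈ hochschildCocycles k A := by
  intro a b c
  apply d.incl_injective
  have assoc := mul_assoc (s a) (s b) (s c)
  simp only [h.apply_mul_apply, add_mul, mul_add, incl_mul, mul_incl, h.proj_apply,
    mul_assoc] at assoc
  simp only [map_add, map_sub, map_zero]
  linear_combination (norm := abel) -assoc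

lemma eq_of_isSection (h : d.IsSection μ s) (h' : d.IsSection μ' s) : μ = μ' :=
  LinearMap.ext₂ fun a b => d.incl_injective <|
    add_left_cancel <| (h.apply_mul_apply a b).symm.trans (h'.apply_mul_apply a b)

lemma add_incl (h : d.IsSection μ s) (g : A →ₗ[k] A) :
    d.IsSection (μ + hochschildCoboundary k A g) (s + d.incl ∘ₗ g) where
  proj_apply a := by simp [h.proj_apply]
  apply_mul_apply a b := by
    simp only [LinearMap.add_apply, LinearMap.comp_apply, hochschildCoboundary_apply, add_mul,
      mul_add, h.apply_mul_apply, incl_mul, mul_incl, h.proj_apply, proj_incl, zero_mul, map_add,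
      map_sub, map_zero]
    abel

lemma exists_eq_add_incl (h : d.IsSection μ s) (h' : d.IsSection μ' s') :
    ∃ g : A →ₗ[k] A, s' = s + d.incl ∘ₗ g := by
  obtain ⟨r, hr⟩ := d.exists_incl_retraction
  refine ⟨r ∘ₗ (s' - s), LinearMap.ext fun a => ?_⟩
  exact eq_add_of_sub_eq' (hr (s' a - s a) (by simp [h.proj_apply, h'.proj_apply])).symm

lemma exists_isSection_iff (h : d.IsSection μ s) :
    (∃ s', d.IsSection μ' s') ↔ μ' - μ ∈ (hochschildCoboundary k A).range := by
  constructor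
  · rintro ⟨s', h'⟩
    obtain ⟨g, rfl⟩ := h.exists_eq_add_incl h'
    exact ⟨g, by rw [← (h.add_incl g).eq_of_isSection h']; abel⟩
  · rintro ⟨g, hg⟩
    have hμ' : μ + hochschildCoboundary k A g = μ' := by rw [hg]; abel
    exact ⟨_, hμ' ▸ h.add_incl g⟩

end IsSection

lemma exists_isSection : ∃ μ s, d.IsSection μ s := by
  obtain ⟨s, hs⟩ := d.proj.toLinearMap.exists_rightInverse_of_surjective
    (LinearMap.range_eq_top.2 d.proj_surjective)
  replace hs a : d.proj (s a) = a := LinearMap.congr_fun hs a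
  obtain ⟨r, hr⟩ := d.exists_incl_retraction
  refine ⟨((LinearMap.mul k d.B).compl₁₂ s s - (LinearMap.mul k A).compr₂ s).compr₂ r, s, hs,
    fun a b => ?_⟩
  exact eq_add_of_sub_eq' (hr (s a * s b - s (a * b)) (by simp [hs])).symm

/-- The deformation given by a `2`-cocycle. -/
noncomputable def ofCocycle (μ : hochschildCocycles k A) : FirstOrderDeformation k A where
  B := CocycleExtension μ
  flat := inferInstance
  iso := (AlgEquiv.ofBijective _ CocycleExtension.toFiber_bijective).symm

variable (μ : hochschildCocycles k A)

lemma proj_ofCocycle (x : CocycleExtension μ) : (ofCocycle μ).proj x = x.fst :=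
  (AlgEquiv.symm_apply_eq (.ofBijective _ CocycleExtension.toFiber_bijective)).2
    (CocycleExtension.one_tmul_eq x)

section SectionEquiv

variable {d μ} {s : A →ₗ[k] d.B} (h : d.IsSection μ.1 s)

/-- The map from a cocycle extension to a deformation given by a section of the reduction. -/
noncomputable def sectionMap : CocycleExtension μ →ₗ[k[ε]] d.B where
  toFun x := s x.fst + d.incl x.snd
  map_add' x y := by simp [add_add_add_comm]
  map_smul' c x := by simp [d.smul_eq c, h.proj_apply, add_assoc]

lemma sectionMap_apply (x : CocycleExtension μ) : sectionMap h x = s x.fst + d.incl x.snd := rfl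

lemma proj_sectionMap (x : CocycleExtension μ) : d.proj (sectionMap h x) = x.fst := by
  simp [sectionMap_apply, h.proj_apply]

lemma sectionMap_bijective : Function.Bijective (sectionMap h) := by
  constructor
  · refine (injective_iff_map_eq_zero _).2 fun x hx => ?_
    have hfst : x.fst = 0 := by rw [← proj_sectionMap h, hx, map_zero]
    have hsnd : d.incl x.snd = 0 := by simpa [sectionMap_apply, hfst] using hx
    exact CocycleExtension.ext hfst ((map_eq_zero_iff _ d.incl_injective).1 hsnd)
  · intro b
    obtain ⟨a, ha⟩ := (d.exact_incl_proj (b - s (d.proj b))).1 (by simp [h.proj_apply])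
    exact ⟨⟨d.proj b, a⟩, by simp [sectionMap_apply, ha]⟩

lemma sectionMap_mul (x y : CocycleExtension μ) :
    sectionMap h (x * y) = sectionMap h x * sectionMap h y := by
  simp only [sectionMap_apply, CocycleExtension.fst_mul, CocycleExtension.snd_mul, map_add, mul_add,
    add_mul, h.apply_mul_apply, incl_mul, mul_incl, h.proj_apply, proj_incl, zero_mul, map_zero]
  abel

/-- A section of the reduction with error term `ε μ` identifies the extension defined by `μ` with
the deformation. -/
noncomputable def sectionEquiv : CocycleExtension μ ≃ₐ[k[ε]] d.B :=
  .ofLinearEquiv (.ofBijective (sectionMap h) (sectionMap_bijective h))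
    (by
      obtain ⟨x, hx⟩ := (sectionMap_bijective h).2 1
      simpa [hx] using (sectionMap_mul h 1 x).symm)
    (sectionMap_mul h)

end SectionEquiv

lemma equivalent_ofCocycle_iff :
    Equivalent k A (ofCocycle μ) d ↔ ∃ s, d.IsSection μ.1 s := by
  rw [equivalent_iff]
  constructor
  · rintro ⟨ψ, hψ⟩
    let s : A →ₗ[k] d.B := ψ.toLinearMap.restrictScalars k ∘ₗ CocycleExtension.const μ
    have hs (a : A) : d.proj (s a) = a := (hψ _).trans (proj_ofCocycle μ _)
    refine ⟨s, hs, fun a b => ?_⟩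
    have const_mul : CocycleExtension.const μ a * CocycleExtension.const μ b =
        CocycleExtension.const μ (a * b) + (ε : k[ε]) • CocycleExtension.const μ (μ.1 a b) := by
      ext <;> simp
    rw [← hs (μ.1 a b), incl_proj]
    exact (map_mul ψ _ _).symm.trans <| (congrArg ψ const_mul).trans <|
      (map_add ψ _ _).trans (congrArg _ (map_smul ψ _ _))
  · rintro ⟨s, hs⟩
    exact ⟨sectionEquiv hs, fun x => (proj_sectionMap hs x).trans (proj_ofCocycle μ x).symm⟩

lemma exists_equivalent_ofCocycle :
    ∃ μ : hochschildCocycles k A, Equivalent k A (ofCocycle μ) d :=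
  let ⟨μ, s, h⟩ := d.exists_isSection
  ⟨⟨μ, h.mem_hochschildCocycles⟩, (equivalent_ofCocycle_iff d _).2 ⟨s, h⟩⟩

lemma ofCocycle_equivalent_iff (μ ν : hochschildCocycles k A) :
    Equivalent k A (ofCocycle μ) (ofCocycle ν) ↔
      ν.1 - μ.1 ∈ (hochschildCoboundary k A).range :=
  let ⟨_, h⟩ := (equivalent_ofCocycle_iff _ μ).1 (equivalence_equivalent.refl _)
  (Iff.intro equivalence_equivalent.symm equivalence_equivalent.symm).trans <|
    (equivalent_ofCocycle_iff _ ν).trans h.exists_isSection_iff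

end FirstOrderDeformation

open FirstOrderDeformation in
/-- Hochschild classes correspond to equivalence classes of deformations. -/
noncomputable def hh2EquivDeformations : HH2 k A ≃ Quot (Equivalent k A) :=
  (Quotient.congrRight fun μ ν => by
    rw [Setoid.ker_def, equivalence_equivalent.quot_mk_eq_iff, ofCocycle_equivalent_iff,
      QuotientAddGroup.leftRel_apply, AddSubgroup.mem_addSubgroupOf, neg_add_eq_sub,
      AddSubgroup.coe_sub]).trans
  (Setoid.quotientKerEquivOfSurjective (fun μ => Quot.mk _ (ofCocycle μ)) <|
    Quot.ind fun d => d.exists_equivalent_ofCocycle.imp fun _ h => Quot.sound h)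

/-- Let `k` be a field and `A` an associative unital `k`-algebra. The set of equivalence
classes of first-order deformations of `A` over the dual numbers `k[ε]` is in (canonical)
bijection with the second Hochschild cohomology group
`HH²(A) = Ext²_{A ⊗[k] Aᵐᵒᵖ}(A, A)`, the Ext group being computed in the abelian
category of left `A ⊗[k] Aᵐᵒᵖ`-modules. -/
theorem firstOrderDeformations_equiv_hochschild :
    Nonempty
      (Quot (Equivalent k A) ≃
        ((Ext ℤ (ModuleCat.{0} (A ⊗[k] Aᵐᵒᵖ)) 2).obj
            (Opposite.op (ModuleCat.of (A ⊗[k] Aᵐᵒᵖ) A))).obj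
          (ModuleCat.of (A ⊗[k] Aᵐᵒᵖ) A)) := by
  exact ⟨(hh2EquivDeformations k A).symm.trans (extTwoAddEquiv k A).toEquiv⟩

end AlgebraDeformation
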